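/- arXiv:1603.08393 — 2 statements merged into one kernel-verified Lean document; each statement's English description precedes it below -/
import Mathlib

section
/- Let 𝒯 be a correct k-shot broadcasting schedule for n. Let S be a sequence of distinct vertices whose first element is designated as the source, occurring in 𝒯, and let T = t(S,0) be the final step of its first occurrence. Let Q ⊆ V ∖ V(S) with |Q| ≥ 2. Then there exists a vertex w ∈ Q that belongs to at least one transmission set after step T and satisfies t_{≤k}(w,T) ≥ T + |Q| − 1. -/
/-- Vertex `v`, first informed at step `T`, transmits at step `t` under the
`k`-shot semantics with schedule `𝒯`: we need `t > T`, `v ∈ 𝒯 t`, and `t` must be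
among the first `k` steps after `T` at which `v` appears in a transmission set,
i.e. fewer than `k` steps `t'` with `T < t' < t` satisfy `v ∈ 𝒯 t'`. -/
def transmitsAt {n : ℕ} (𝒯 : ℕ → Finset (Fin n)) (k : ℕ)
    (T t : ℕ) (v : Fin n) : Prop :=
  T < t ∧ v ∈ 𝒯 t ∧ ((Finset.Ioo T t).filter (fun t' => v ∈ 𝒯 t')).card < k

open Classical in
/-- `runState 𝒯 k adj s t v = some T` iff vertex `v` has been informed by the end of
step `t`, and was first informed at step `T`.  The source `s` is informed at step `0`;
an uninformed vertex `w` becomes informed at step `t+1` iff exactly one in-neighbor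
of `w` transmits at step `t+1`. -/
noncomputable def runState {n : ℕ} (𝒯 : ℕ → Finset (Fin n)) (k : ℕ)
    (adj : Fin n → Fin n → Prop) (s : Fin n) : ℕ → Fin n → Option ℕ
  | 0 => fun v => if v = s then some 0 else none
  | t + 1 => fun w =>
      match runState 𝒯 k adj s t w with
      | some T => some T
      | none =>
          if ∃! v : Fin n, adj v w ∧
              ∃ T, runState 𝒯 k adj s t v = some T ∧ transmitsAt 𝒯 k T (t + 1) v
          then some (t + 1) else none

/-- `adj` together with source `s` forms an `n`-vertex radio network:
every vertex is reachable from the source by a directed path. -/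
def IsNetwork {n : ℕ} (adj : Fin n → Fin n → Prop) (s : Fin n) : Prop :=
  ∀ v : Fin n, Relation.ReflTransGen adj s v

/-- The schedule `𝒯` completes broadcasting on the network `(adj, s)`. -/
def Completes {n : ℕ} (𝒯 : ℕ → Finset (Fin n)) (k : ℕ)
    (adj : Fin n → Fin n → Prop) (s : Fin n) : Prop :=
  ∀ v : Fin n, ∃ t : ℕ, (runState 𝒯 k adj s t v).isSome

/-- `𝒯` is a correct `k`-shot broadcasting schedule for `n`: it completes
broadcasting on every `n`-vertex radio network. -/
def CorrectSchedule (n k : ℕ) (𝒯 : ℕ → Finset (Fin n)) : Prop :=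
  ∀ (adj : Fin n → Fin n → Prop) (s : Fin n), IsNetwork adj s → Completes 𝒯 k adj s

/-- The sequence `S` of vertices occurs in the schedule `𝒯` after step `T`:
there are steps `T < t₁ < t₂ < …` with the `i`-th element of `S` in `𝒯 tᵢ`. -/
def Occurs {n : ℕ} (𝒯 : ℕ → Finset (Fin n)) : List (Fin n) → ℕ → Prop
  | [], _ => True
  | v :: rest, T => ∃ t : ℕ, T < t ∧ v ∈ 𝒯 t ∧ Occurs 𝒯 rest t

/-- The final step `t(S,T)` of the first occurrence of the sequence `S` after step
`T`: each step is taken minimal in turn (greedily). -/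
noncomputable def occEnd {n : ℕ} (𝒯 : ℕ → Finset (Fin n)) : List (Fin n) → ℕ → ℕ
  | [], T => T
  | v :: rest, T => occEnd 𝒯 rest (sInf {t : ℕ | T < t ∧ v ∈ 𝒯 t})

/-- `tIdx 𝒯 v T i` is the step `t_i(v,T)`: the `i`-th step `t > T` with `v ∈ 𝒯 t`
(and `T` itself for `i = 0`). -/
noncomputable def tIdx {n : ℕ} (𝒯 : ℕ → Finset (Fin n)) (v : Fin n) (T : ℕ) : ℕ → ℕ
  | 0 => T
  | i + 1 => sInf {t : ℕ | tIdx 𝒯 v T i < t ∧ v ∈ 𝒯 t}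

/-- `shots 𝒯 k v T`: the number of steps `t > T` with `v ∈ 𝒯 t`, capped at `k`;
equivalently the largest `i ≤ k` such that `v` occurs `i` times after step `T`. -/
noncomputable def shots {n : ℕ} (𝒯 : ℕ → Finset (Fin n)) (k : ℕ) (v : Fin n) (T : ℕ) : ℕ :=
  sSup {i : ℕ | i ≤ k ∧ Occurs 𝒯 (List.replicate i v) T}

/-- `t_{≤k}(v,T) = t_{shots(v,T)}(v,T)`. -/
noncomputable def tLeK {n : ℕ} (𝒯 : ℕ → Finset (Fin n)) (k : ℕ) (v : Fin n) (T : ℕ) : ℕ :=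
  tIdx 𝒯 v T (shots 𝒯 k v T)

/-! A correct schedule must isolate one vertex of every nonempty set `X` disjoint from the
sequence `S`, provided some vertex `z` lies outside both. Take the network that is a directed path
along `S`, whose last vertex feeds every vertex of `X`, all of which feed `z`. With no other
in-edges, the path is traversed exactly along the first occurrence of `S`, so all of `X` is first
informed at `T = t(S,0)`, and `z` is informed only at a step when exactly one vertex of `X`
transmits.

On the other hand, with `q = |Q|`, any `q - 2` steps can be spoiled by a suitable nonempty subset
of `q - 1` vertices: as long as some step isolates a vertex of the current subset, discard that
vertex together with that step. Apply this to the steps strictly between `T` and `T + q - 1` and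
to `Q ∖ {z}`: the vertex of the resulting `X` that gets isolated still transmits at some step
`t ≥ T + q - 1`, hence `t_{≤k} ≥ t`. -/

theorem exists_nonempty_subset_forall_not_existsUnique {ι α : Type*} (r : ι → α → Prop)
    (D : Finset ι) (Y : Finset α) (hcard : D.card < Y.card) :
    ∃ X ⊆ Y, X.Nonempty ∧ ∀ t ∈ D, ¬ ∃! x, x ∈ X ∧ r t x := by
  classical
  induction D using Finset.strongInduction generalizing Y with
  | H D ih =>
    by_cases hisolates : ∃ t ∈ D, ∃! x, x ∈ Y ∧ r t x
    · obtain ⟨t, ht, x, ⟨hx, -⟩, hunique⟩ := hisolates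
      have hcard' : (D.erase t).card < (Y.erase x).card := by
        have := Finset.card_pos.2 ⟨t, ht⟩
        rw [Finset.card_erase_of_mem ht, Finset.card_erase_of_mem hx]
        omega
      obtain ⟨X, hXY, hXne, hX⟩ := ih _ (Finset.erase_ssubset ht) _ hcard'
      refine ⟨X, hXY.trans (Finset.erase_subset _ _), hXne, fun t' ht' => ?_⟩
      obtain rfl | hne := eq_or_ne t' t
      · rintro ⟨y, ⟨hy, hry⟩, -⟩
        obtain ⟨hyx, hyY⟩ := Finset.mem_erase.1 (hXY hy)
        exact hyx (hunique y ⟨hyY, hry⟩)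
      · exact hX t' (Finset.mem_erase.2 ⟨hne, ht'⟩)
    · push Not at hisolates
      exact ⟨Y, subset_rfl, Finset.card_pos.1 (by omega), hisolates⟩

section PairInfix

variable {V : Type*} {u v w : V}

theorem eq_of_pair_infix_of_nodup {S : List V} (hS : S.Nodup) (hu : [u, w] <:+: S)
    (hv : [v, w] <:+: S) : u = v := by
  obtain ⟨l₁, l₂, rfl⟩ := hu
  obtain ⟨l₁', l₂', hsplit⟩ := hv
  have hsplit' : (l₁ ++ [u]) ++ w :: l₂ = (l₁' ++ [v]) ++ w :: l₂' := by simpa using hsplit.symm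
  have hw₁ : w ∉ l₁ ++ [u] := by grind
  have hw₂ : w ∉ l₂ := by grind
  have hprefix : l₁ ++ [u] = l₁' ++ [v] :=
    ((List.append_cons_inj_of_notMem hw₁ hw₂).1 hsplit').1
  exact List.singleton_inj.1 (List.append_inj' hprefix rfl).2

theorem ne_head_of_pair_infix_of_nodup {s : V} {l : List V} (hS : (s :: l).Nodup)
    (h : [u, w] <:+: s :: l) : w ≠ s := by
  have hw : w ∈ l := by
    obtain ⟨l₁, l₂, hsplit⟩ := h
    cases l₁ <;> grind
  exact ne_of_mem_of_not_mem hw (List.nodup_cons.1 hS).1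

end PairInfix

section Schedule

variable {n : ℕ} {𝒯 : ℕ → Finset (Fin n)} {k : ℕ} {v : Fin n} {T t : ℕ}

/-- The step `t_1(v,T)`: the first step after `T` whose transmission set contains `v`. It is the
common recursion step of `occEnd` and `tIdx`, and takes the junk value `0` if there is no such
step. -/
noncomputable def nextStep (𝒯 : ℕ → Finset (Fin n)) (v : Fin n) (T : ℕ) : ℕ :=
  sInf {t : ℕ | T < t ∧ v ∈ 𝒯 t}

theorem lt_nextStep (h : ∃ t, T < t ∧ v ∈ 𝒯 t) : T < nextStep 𝒯 v T :=
  (Nat.sInf_mem (s := {t : ℕ | T < t ∧ v ∈ 𝒯 t}) h).1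

theorem mem_nextStep (h : ∃ t, T < t ∧ v ∈ 𝒯 t) : v ∈ 𝒯 (nextStep 𝒯 v T) :=
  (Nat.sInf_mem (s := {t : ℕ | T < t ∧ v ∈ 𝒯 t}) h).2

theorem nextStep_le (hT : T < t) (hv : v ∈ 𝒯 t) : nextStep 𝒯 v T ≤ t :=
  Nat.sInf_le ⟨hT, hv⟩

theorem transmitsAt_nextStep (hk : 1 ≤ k) (h : ∃ t, T < t ∧ v ∈ 𝒯 t) :
    transmitsAt 𝒯 k T (nextStep 𝒯 v T) v := by
  refine ⟨lt_nextStep h, mem_nextStep h, ?_⟩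
  rw [Finset.filter_false_of_mem, Finset.card_empty]
  · exact hk
  · intro t ht hv
    rw [Finset.mem_Ioo] at ht
    exact (nextStep_le ht.1 hv).not_gt ht.2

theorem Occurs.mono {L : List (Fin n)} {T' : ℕ} (h : Occurs 𝒯 L T) (hT : T' ≤ T) :
    Occurs 𝒯 L T' := by
  cases L with
  | nil => trivial
  | cons u L =>
    obtain ⟨t, ht, hu, hL⟩ := h
    exact ⟨t, hT.trans_lt ht, hu, hL⟩

theorem occurs_cons_iff {L : List (Fin n)} :
    Occurs 𝒯 (v :: L) T ↔ (∃ t, T < t ∧ v ∈ 𝒯 t) ∧ Occurs 𝒯 L (nextStep 𝒯 v T) := by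
  constructor
  · rintro ⟨t, ht, hv, hL⟩
    exact ⟨⟨t, ht, hv⟩, hL.mono (nextStep_le ht hv)⟩
  · rintro ⟨h, hL⟩
    exact ⟨_, lt_nextStep h, mem_nextStep h, hL⟩

theorem tIdx_succ_eq_tIdx_nextStep (i : ℕ) :
    tIdx 𝒯 v T (i + 1) = tIdx 𝒯 v (nextStep 𝒯 v T) i := by
  induction i with
  | zero => rfl
  | succ i ih => rw [tIdx, ih, tIdx]

theorem Occurs.le_tIdx {i : ℕ} (h : Occurs 𝒯 (List.replicate i v) T) : T ≤ tIdx 𝒯 v T i := by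
  induction i generalizing T with
  | zero => exact le_rfl
  | succ i ih =>
    obtain ⟨hex, hrest⟩ := occurs_cons_iff.1 h
    rw [tIdx_succ_eq_tIdx_nextStep]
    exact (lt_nextStep hex).le.trans (ih hrest)

theorem Occurs.replicate_succ_of_tIdx_lt {i : ℕ} (h : Occurs 𝒯 (List.replicate i v) T)
    (ht : tIdx 𝒯 v T i < t) (hv : v ∈ 𝒯 t) : Occurs 𝒯 (List.replicate (i + 1) v) T := by
  induction i generalizing T with
  | zero => exact ⟨t, ht, hv, trivial⟩
  | succ i ih =>
    obtain ⟨hex, hrest⟩ := occurs_cons_iff.1 h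
    rw [tIdx_succ_eq_tIdx_nextStep] at ht
    exact occurs_cons_iff.2 ⟨hex, ih hrest ht⟩

theorem Occurs.le_card_filter_of_tIdx_lt {i : ℕ} (h : Occurs 𝒯 (List.replicate i v) T)
    (ht : tIdx 𝒯 v T i < t) : i ≤ ((Finset.Ioo T t).filter (fun t' => v ∈ 𝒯 t')).card := by
  induction i generalizing T with
  | zero => exact Nat.zero_le _
  | succ i ih =>
    obtain ⟨hex, hrest⟩ := occurs_cons_iff.1 h
    rw [tIdx_succ_eq_tIdx_nextStep] at ht
    set T₁ := nextStep 𝒯 v T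
    have hTT₁ : T < T₁ := lt_nextStep hex
    have hT₁t : T₁ < t := hrest.le_tIdx.trans_lt ht
    have hsub : insert T₁ ((Finset.Ioo T₁ t).filter (fun t' => v ∈ 𝒯 t')) ⊆
        (Finset.Ioo T t).filter (fun t' => v ∈ 𝒯 t') := by
      refine Finset.insert_subset ?_
        (Finset.filter_subset_filter _ (Finset.Ioo_subset_Ioo_left hTT₁.le))
      exact Finset.mem_filter.2 ⟨Finset.mem_Ioo.2 ⟨hTT₁, hT₁t⟩, mem_nextStep hex⟩
    calc i + 1 ≤ ((Finset.Ioo T₁ t).filter (fun t' => v ∈ 𝒯 t')).card + 1 :=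
          Nat.succ_le_succ (ih hrest ht)
      _ = (insert T₁ ((Finset.Ioo T₁ t).filter (fun t' => v ∈ 𝒯 t'))).card :=
          (Finset.card_insert_of_notMem (by simp)).symm
      _ ≤ _ := Finset.card_le_card hsub

theorem bddAbove_setOf_occurs_replicate (𝒯 : ℕ → Finset (Fin n)) (k : ℕ) (v : Fin n) (T : ℕ) :
    BddAbove {i : ℕ | i ≤ k ∧ Occurs 𝒯 (List.replicate i v) T} :=
  ⟨k, fun _ hi => hi.1⟩

theorem occurs_replicate_shots (𝒯 : ℕ → Finset (Fin n)) (k : ℕ) (v : Fin n) (T : ℕ) :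
    Occurs 𝒯 (List.replicate (shots 𝒯 k v T) v) T :=
  (Nat.sSup_mem (s := {i : ℕ | i ≤ k ∧ Occurs 𝒯 (List.replicate i v) T})
    ⟨0, Nat.zero_le k, trivial⟩ (bddAbove_setOf_occurs_replicate 𝒯 k v T)).2

theorem le_shots {i : ℕ} (hi : i ≤ k) (h : Occurs 𝒯 (List.replicate i v) T) :
    i ≤ shots 𝒯 k v T :=
  le_csSup (bddAbove_setOf_occurs_replicate 𝒯 k v T) ⟨hi, h⟩

theorem transmitsAt.le_tLeK (h : transmitsAt 𝒯 k T t v) : t ≤ tLeK 𝒯 k v T := by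
  obtain ⟨-, hv, hcard⟩ := h
  by_contra! hlt
  have hoccurs := occurs_replicate_shots 𝒯 k v T
  have hshots : shots 𝒯 k v T < k := (hoccurs.le_card_filter_of_tIdx_lt hlt).trans_lt hcard
  exact (le_shots hshots (hoccurs.replicate_succ_of_tIdx_lt hlt hv)).not_gt (Nat.lt_succ_self _)

end Schedule

section Execution

variable {n : ℕ} {𝒯 : ℕ → Finset (Fin n)} {k : ℕ} {adj : Fin n → Fin n → Prop}
  {s u w x : Fin n} {T t : ℕ}

/-- Exactly one in-neighbor of `w` transmits at step `t + 1`. This is the condition under which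
`runState` informs `w`, with the same shift of the step by one. -/
def HearsAtSucc (𝒯 : ℕ → Finset (Fin n)) (k : ℕ) (adj : Fin n → Fin n → Prop) (s : Fin n)
    (t : ℕ) (w : Fin n) : Prop :=
  ∃! v : Fin n, adj v w ∧ ∃ T, runState 𝒯 k adj s t v = some T ∧ transmitsAt 𝒯 k T (t + 1) v

/-- The vertex `v` is first informed at step `T`, that is, `T(v) = T`. -/
def InformedAt (𝒯 : ℕ → Finset (Fin n)) (k : ℕ) (adj : Fin n → Fin n → Prop) (s : Fin n)
    (v : Fin n) (T : ℕ) : Prop :=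
  runState 𝒯 k adj s T v = some T

/-- In a network with source `s`, the vertex `w` can only be informed by `u`: it is not the source
and `u` is its unique in-neighbor. -/
def IsSoleInformer {V : Type*} (adj : V → V → Prop) (s u w : V) : Prop :=
  w ≠ s ∧ ∀ y, adj y w ↔ y = u

open Classical in
theorem runState_succ : runState 𝒯 k adj s (t + 1) w =
    (runState 𝒯 k adj s t w).or (if HearsAtSucc 𝒯 k adj s t w then some (t + 1) else none) := by
  simp only [runState, HearsAtSucc]
  cases runState 𝒯 k adj s t w <;> rfl

theorem informedAt_source : InformedAt 𝒯 k adj s s 0 := by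
  simp [InformedAt, runState]

theorem runState_eq_none_iff :
    runState 𝒯 k adj s t w = none ↔ w ≠ s ∧ ∀ t' < t, ¬ HearsAtSucc 𝒯 k adj s t' w := by
  induction t with
  | zero => simp [runState]
  | succ t ih =>
    rw [runState_succ, Option.or_eq_none_iff, ih, Nat.forall_lt_succ_right, and_assoc]
    simp

theorem informedAt_succ (hws : w ≠ s) (hbefore : ∀ t' < t, ¬ HearsAtSucc 𝒯 k adj s t' w)
    (h : HearsAtSucc 𝒯 k adj s t w) : InformedAt 𝒯 k adj s w (t + 1) := by
  rw [InformedAt, runState_succ, runState_eq_none_iff.2 ⟨hws, hbefore⟩, Option.none_or, if_pos h]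

theorem runState_eq_some_of_le {t' : ℕ} (h : runState 𝒯 k adj s t w = some T) (ht : t ≤ t') :
    runState 𝒯 k adj s t' w = some T := by
  induction t', ht using Nat.le_induction with
  | base => exact h
  | succ m _ ih => rw [runState_succ, ih, Option.some_or]

theorem InformedAt.eq_of_runState_eq_some {T' : ℕ} (h : InformedAt 𝒯 k adj s w T)
    (h' : runState 𝒯 k adj s t w = some T') : T' = T := by
  have hT := runState_eq_some_of_le h (le_max_left T t)
  have hT' := runState_eq_some_of_le h' (le_max_right T t)
  exact Option.some.inj (hT'.symm.trans hT)

theorem hearsAtSucc_iff_of_forall_informedAt (h : ∀ v, adj v w → InformedAt 𝒯 k adj s v T) :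
    HearsAtSucc 𝒯 k adj s t w ↔ ∃! v, adj v w ∧ transmitsAt 𝒯 k T (t + 1) v := by
  refine existsUnique_congr fun v => and_congr_right fun hv => ⟨?_, fun htr => ?_⟩
  · rintro ⟨T', hT', htr⟩
    exact (h v hv).eq_of_runState_eq_some hT' ▸ htr
  · exact ⟨T, runState_eq_some_of_le (h v hv) (Nat.le_of_lt_succ htr.1), htr⟩

theorem IsSoleInformer.hearsAtSucc_iff (h : IsSoleInformer adj s u w)
    (hu : InformedAt 𝒯 k adj s u T) :
    HearsAtSucc 𝒯 k adj s t w ↔ transmitsAt 𝒯 k T (t + 1) u := by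
  rw [hearsAtSucc_iff_of_forall_informedAt fun v hv => (h.2 v).1 hv ▸ hu]
  simp only [h.2]
  exact ⟨fun ⟨_, ⟨hv, htr⟩, _⟩ => hv ▸ htr, fun htr => ⟨u, ⟨rfl, htr⟩, fun _ hy => hy.1⟩⟩

theorem IsSoleInformer.informedAt_nextStep (h : IsSoleInformer adj s u w) (hk : 1 ≤ k)
    (hu : InformedAt 𝒯 k adj s u T) (hex : ∃ t, T < t ∧ u ∈ 𝒯 t) :
    InformedAt 𝒯 k adj s w (nextStep 𝒯 u T) := by
  obtain ⟨t, ht⟩ := Nat.exists_eq_add_one_of_ne_zero (lt_nextStep hex).ne_bot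
  have hhears : HearsAtSucc 𝒯 k adj s t w :=
    (h.hearsAtSucc_iff hu).2 (ht ▸ transmitsAt_nextStep hk hex)
  have hbefore : ∀ t' < t, ¬ HearsAtSucc 𝒯 k adj s t' w := by
    intro t' ht' hhears'
    obtain ⟨hT, hmem, -⟩ := (h.hearsAtSucc_iff hu).1 hhears'
    have := nextStep_le hT hmem
    omega
  exact ht ▸ informedAt_succ h.1 hbefore hhears

theorem informedAt_occEnd_of_isChain {v : Fin n} {L : List (Fin n)} (hk : 1 ≤ k)
    (hv : InformedAt 𝒯 k adj s v T)
    (hchain : List.IsChain (IsSoleInformer adj s) (v :: L ++ [x])) (hL : Occurs 𝒯 (v :: L) T) :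
    InformedAt 𝒯 k adj s x (occEnd 𝒯 (v :: L) T) := by
  induction L generalizing v T with
  | nil =>
    have hvx : IsSoleInformer adj s v x := by simpa using hchain
    exact hvx.informedAt_nextStep hk hv (occurs_cons_iff.1 hL).1
  | cons u L ih =>
    obtain ⟨hvu, hchain'⟩ := List.isChain_cons_cons.1 hchain
    obtain ⟨hex, hL'⟩ := occurs_cons_iff.1 hL
    exact ih (hvu.informedAt_nextStep hk hv hex) hchain' hL'

end Execution

section CollisionNetwork

/-- Edges of the collision network: the directed path along `S`, the edges from its last vertex to
`X`, and those from `X` to `z`. The first vertex of `S` feeds all remaining vertices, which only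
serves to make every vertex reachable. -/
inductive CollisionAdj {V : Type*} (S : List V) (X : Finset V) (z : V) : V → V → Prop
  | path {u w : V} (h : [u, w] <:+: S) : CollisionAdj S X z u w
  | fan {u w : V} (hu : u ∈ S.getLast?) (hw : w ∈ X) : CollisionAdj S X z u w
  | sink {u : V} (hu : u ∈ X) : CollisionAdj S X z u z
  | rest {u w : V} (hu : u ∈ S.head?) (hwS : w ∉ S) (hwX : w ∉ X) (hwz : w ≠ z) :
      CollisionAdj S X z u w

variable {V : Type*} {S : List V} {X : Finset V} {z u w : V}

theorem collisionAdj_iff_of_pair_infix (hS : S.Nodup) (hXS : ∀ v ∈ X, v ∉ S) (hzS : z ∉ S)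
    (h : [u, w] <:+: S) (y : V) : CollisionAdj S X z y w ↔ y = u := by
  have hwS : w ∈ S := h.subset (by simp)
  refine ⟨?_, fun hy => hy ▸ .path h⟩
  rintro (h' | ⟨-, hw⟩ | - | ⟨-, hw, -⟩)
  · exact eq_of_pair_infix_of_nodup hS h' h
  · exact absurd hwS (hXS w hw)
  · exact absurd hwS hzS
  · exact absurd hwS hw

theorem collisionAdj_iff_of_mem (hXS : ∀ v ∈ X, v ∉ S) (hzX : z ∉ X) (hw : w ∈ X) (y : V) :
    CollisionAdj S X z y w ↔ y ∈ S.getLast? := by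
  refine ⟨?_, fun hy => .fan hy hw⟩
  rintro (h | ⟨hy, -⟩ | - | ⟨-, -, hwX, -⟩)
  · exact absurd (h.subset (by simp)) (hXS w hw)
  · exact hy
  · exact absurd hw hzX
  · exact absurd hw hwX

theorem collisionAdj_sink_iff (hzS : z ∉ S) (hzX : z ∉ X) (y : V) :
    CollisionAdj S X z y z ↔ y ∈ X := by
  refine ⟨?_, .sink⟩
  rintro (h | ⟨-, hz⟩ | hy | ⟨-, -, -, hz⟩)
  · exact absurd (h.subset (by simp)) hzS
  · exact absurd hz hzX
  · exact hy
  · exact absurd rfl hz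

theorem isChain_isSoleInformer_collisionAdj {s x : V} {l : List V} (hS : (s :: l).Nodup)
    (hXS : ∀ v ∈ X, v ∉ s :: l) (hzS : z ∉ s :: l) (hzX : z ∉ X) (hx : x ∈ X) :
    List.IsChain (IsSoleInformer (CollisionAdj (s :: l) X z) s) (s :: l ++ [x]) := by
  refine List.isChain_append.2 ⟨?_, List.isChain_singleton x, ?_⟩
  · rw [List.isChain_iff_forall_rel_of_append_cons_cons]
    intro u w l₁ l₂ hsplit
    have hinfix : [u, w] <:+: s :: l := ⟨l₁, l₂, by simp [hsplit]⟩
    exact ⟨ne_head_of_pair_infix_of_nodup hS hinfix,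
      collisionAdj_iff_of_pair_infix hS hXS hzS hinfix⟩
  · intro u hu w hw
    obtain rfl : x = w := by simpa using hw
    refine ⟨fun hxs => hXS x hx (hxs ▸ List.mem_cons_self), fun y => ?_⟩
    rw [collisionAdj_iff_of_mem hXS hzX hx, Option.mem_def, Option.mem_def.1 hu, Option.some_inj,
      eq_comm]

theorem isNetwork_collisionAdj {n : ℕ} {s z : Fin n} {l : List (Fin n)} {X : Finset (Fin n)}
    (hS : (s :: l).Nodup) (hXS : ∀ v ∈ X, v ∉ s :: l)
    (hzS : z ∉ s :: l) (hzX : z ∉ X) (hXne : X.Nonempty) :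
    IsNetwork (CollisionAdj (s :: l) X z) s := by
  have hreach : ∀ x ∈ X, ∀ v ∈ s :: l ++ [x],
      Relation.ReflTransGen (CollisionAdj (s :: l) X z) s v := fun x hx =>
    (isChain_isSoleInformer_collisionAdj hS hXS hzS hzX hx).induction _ _
      (fun u _ h hu => hu.tail ((h.2 u).2 rfl)) fun _ => .refl
  obtain ⟨x, hx⟩ := hXne
  intro v
  by_cases hvS : v ∈ s :: l
  · exact hreach x hx v (List.mem_append_left _ hvS)
  by_cases hvX : v ∈ X
  · exact hreach v hvX v (by simp)
  obtain rfl | hvz := eq_or_ne v z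
  · exact (hreach x hx x (by simp)).tail (.sink hx)
  · exact .single (.rest rfl hvS hvX hvz)

end CollisionNetwork

theorem CorrectSchedule.exists_existsUnique_transmitsAt {n k : ℕ} {𝒯 : ℕ → Finset (Fin n)}
    (hcorr : CorrectSchedule n k 𝒯) (hk : 1 ≤ k) {S : List (Fin n)} (hSne : S ≠ [])
    (hSnd : S.Nodup) (hSocc : Occurs 𝒯 S 0) {X : Finset (Fin n)} (hXne : X.Nonempty)
    (hXS : ∀ v ∈ X, v ∉ S) {z : Fin n} (hzS : z ∉ S) (hzX : z ∉ X) :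
    ∃ t, ∃! x, x ∈ X ∧ transmitsAt 𝒯 k (occEnd 𝒯 S 0) t x := by
  obtain ⟨s, l, rfl⟩ := List.exists_cons_of_ne_nil hSne
  have hinformed : ∀ x ∈ X,
      InformedAt 𝒯 k (CollisionAdj (s :: l) X z) s x (occEnd 𝒯 (s :: l) 0) := fun x hx =>
    informedAt_occEnd_of_isChain hk informedAt_source
      (isChain_isSoleInformer_collisionAdj hSnd hXS hzS hzX hx) hSocc
  have hsink := collisionAdj_sink_iff hzS hzX
  by_contra! hcollide
  have hsilent : ∀ t, ¬ HearsAtSucc 𝒯 k (CollisionAdj (s :: l) X z) s t z := by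
    intro t
    rw [hearsAtSucc_iff_of_forall_informedAt fun x hx => hinformed x ((hsink x).1 hx)]
    simpa only [hsink] using hcollide (t + 1)
  obtain ⟨t, ht⟩ := hcorr _ s (isNetwork_collisionAdj hSnd hXS hzS hzX hXne) z
  have hnone : runState 𝒯 k (CollisionAdj (s :: l) X z) s t z = none :=
    runState_eq_none_iff.2 ⟨List.ne_of_not_mem_cons hzS, fun t' _ => hsilent t'⟩
  simp [hnone] at ht

/-- Let `𝒯` be a correct `k`-shot broadcasting schedule for `n`,
`S` a sequence of distinct vertices (its first element designated as the source)
occurring in `𝒯`, and `T = t(S,0)` the final step of its first occurrence.  For any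
`Q ⊆ V ∖ V(S)` with `|Q| ≥ 2` there is a vertex `w ∈ Q` that belongs to at least one
transmission set after step `T` and satisfies `t_{≤k}(w,T) ≥ T + |Q| − 1`. -/
theorem confl_sub (n k : ℕ) (hn : 2 ≤ n) (hk : 1 ≤ k)
    (𝒯 : ℕ → Finset (Fin n)) (hcorr : CorrectSchedule n k 𝒯)
    (S : List (Fin n)) (hSne : S ≠ []) (hSnd : S.Nodup) (hSocc : Occurs 𝒯 S 0)
    (Q : Finset (Fin n)) (hQS : ∀ v ∈ Q, v ∉ S) (hQ2 : 2 ≤ Q.card) :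
    ∃ w ∈ Q,
      (∃ t : ℕ, occEnd 𝒯 S 0 < t ∧ w ∈ 𝒯 t) ∧
      occEnd 𝒯 S 0 + Q.card - 1 ≤ tLeK 𝒯 k w (occEnd 𝒯 S 0) := by
  obtain ⟨z, hz⟩ : Q.Nonempty := Finset.card_pos.1 (by omega)
  set T := occEnd 𝒯 S 0
  have hcard : (Finset.Ioo T (T + Q.card - 1)).card < (Q.erase z).card := by
    rw [Nat.card_Ioo, Finset.card_erase_of_mem hz]
    omega
  obtain ⟨X, hXQ, hXne, hcollide⟩ :=
    exists_nonempty_subset_forall_not_existsUnique (transmitsAt 𝒯 k T) _ _ hcard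
  have hXQ' : ∀ v ∈ X, v ∈ Q := fun v hv => Finset.mem_of_mem_erase (hXQ hv)
  have hzX : z ∉ X := fun h => Finset.notMem_erase z Q (hXQ h)
  obtain ⟨t, hisolated⟩ := hcorr.exists_existsUnique_transmitsAt hk hSne hSnd hSocc hXne
    (fun v hv => hQS v (hXQ' v hv)) (hQS z hz) hzX
  obtain ⟨w, hwX, htr⟩ := hisolated.exists
  have hlate : T + Q.card - 1 ≤ t := by
    by_contra! hlt
    exact hcollide t (Finset.mem_Ioo.2 ⟨htr.1, hlt⟩) hisolated
  exact ⟨w, hXQ' w hwX, ⟨t, htr.1, htr.2.1⟩, hlate.trans htr.le_tLeK⟩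
end

section
/- In the Oblivious k-Shot schedule (for 3 ≤ k ≤ √n), for every vertex v ∈ {0, …, n−1} and every step T, among the first k steps after T at which v belongs to the transmission set, at least one is a Round-Robin step, whose transmission set is the singleton {v}. Consequently, every vertex that becomes informed transmits at least once as the only transmitting node in the network. -/
/-- The ceiling of the square root of a natural number: the least `m` with `n ≤ m²`. -/
def ceilSqrt (n : ℕ) : ℕ :=
  if Nat.sqrt n * Nat.sqrt n = n then Nat.sqrt n else Nat.sqrt n + 1

/-- The smallest prime `p` with `p ≥ m`. -/
def smallestPrimeGE (m : ℕ) : ℕ := Nat.find (Nat.exists_infinite_primes m)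

/-- `p` for the Oblivious k-Shot schedule: the smallest prime `≥ ⌈√n⌉`. -/
def obP (n : ℕ) : ℕ := smallestPrimeGE (ceilSqrt n)

/-- `K = ⌈p/(k−2)⌉` for the Oblivious k-Shot schedule (`k ≥ 3`). -/
def obK (n k : ℕ) : ℕ := (obP n + (k - 3)) / (k - 2)

/-- The point of the plane `(ZMod p) × (ZMod p)` associated with label `i`. -/
def pointOf (p : ℕ) (i : ℕ) : ZMod p × ZMod p := ((i / p : ℕ), (i % p : ℕ))

/-- Membership in the line `L_{a,b}` of direction `a ∈ {0,…,p}` and offset `b ∈ ZMod p`: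
`L_{p,b} = {(x,y) : x = b}` and `L_{a,b} = {(x,y) : y = a·x + b}` for `a < p`. -/
def lineMem (p a : ℕ) (b : ZMod p) (q : ZMod p × ZMod p) : Prop :=
  if a = p then q.1 = b else q.2 = (a : ZMod p) * q.1 + b

open Classical in
/-- The Oblivious k-Shot schedule on labels `{0,…,n−1}`.  Steps `t = 1, 2, …` come
in consecutive blocks of `K+1` steps.  The first step of the `r`-th block
(`r = 0, 1, …`) is the `r`-th Line-Transmit step, with transmission set
`{i < n : point(i) ∈ L_{a,b}}` where `b = r mod p` and `a = ⌊r/p⌋ mod (p+1)`.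
The remaining `K` steps of each block are Round-Robin steps; the `j`-th
Round-Robin step overall has transmission set `{j mod p²} ∩ {0,…,n−1}`. -/
noncomputable def obSched (n k : ℕ) : ℕ → Finset (Fin n) := fun t =>
  let p := obP n
  let K := obK n k
  if t = 0 then ∅
  else
    let t' := t - 1
    let r := t' / (K + 1)
    let pos := t' % (K + 1)
    if pos = 0 then
      Finset.univ.filter
        (fun i : Fin n => lineMem p ((r / p) % (p + 1)) ((r % p : ℕ) : ZMod p) (pointOf p (i : ℕ)))
    else
      Finset.univ.filter (fun i : Fin n => (i : ℕ) = (r * K + (pos - 1)) % (p ^ 2))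

/-!
Let `t` be the first Round-Robin step after `T` at which `v` transmits. Round-Robin visits every
label once in `p²` Round-Robin steps, and `p² ≤ p · (k - 2) · K`, so at most `p · (k - 2)` blocks
start strictly between `T` and `t`. Before `t`, the vertex `v` transmits only in Line-Transmit
steps. The blocks `r` with a common `⌊r/p⌋` have parallel lines, so `v` lies on at most one of
them; and a run of `p · (k - 2)` blocks meets at most `k - 1` values of `⌊r/p⌋`.
-/

theorem exists_mod_eq_of_lt {m v : ℕ} (hv : v < m) (a : ℕ) :
    ∃ j, a ≤ j ∧ j < a + m ∧ j % m = v := by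
  have hmem : v ∈ (Finset.Ico a (a + m)).image (· % m) := by
    rw [Nat.image_Ico_mod]
    exact Finset.mem_range.2 hv
  obtain ⟨j, hj, hjv⟩ := Finset.mem_image.1 hmem
  exact ⟨j, (Finset.mem_Ico.1 hj).1, (Finset.mem_Ico.1 hj).2, hjv⟩

theorem card_le_of_subset_Ico_of_injOn_div {p a m : ℕ} {S : Finset ℕ} (hp : 0 < p)
    (hS : S ⊆ Finset.Ico a (a + p * m)) (hinj : Set.InjOn (· / p) (S : Set ℕ)) :
    S.card ≤ m + 1 := by
  have hmaps : Set.MapsTo (· / p) (S : Set ℕ) (Finset.Icc (a / p) (a / p + m) : Finset ℕ) := by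
    intro r hr
    obtain ⟨har, hrb⟩ := Finset.mem_Ico.1 (hS hr)
    refine Finset.mem_coe.2 (Finset.mem_Icc.2 ⟨Nat.div_le_div_right har, ?_⟩)
    rw [← Nat.add_mul_div_left a m hp]
    exact Nat.div_le_div_right hrb.le
  have hcard := Finset.card_le_card_of_injOn _ hmaps hinj
  rw [Nat.card_Icc] at hcard
  omega

theorem le_ceilSqrt_sq (n : ℕ) : n ≤ ceilSqrt n ^ 2 := by
  rw [ceilSqrt, sq]
  split_ifs with hsquare
  · exact hsquare.ge
  · exact (Nat.lt_succ_sqrt n).le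

theorem obP_prime (n : ℕ) : (obP n).Prime :=
  (Nat.find_spec (Nat.exists_infinite_primes (ceilSqrt n))).2

theorem ceilSqrt_le_obP (n : ℕ) : ceilSqrt n ≤ obP n :=
  (Nat.find_spec (Nat.exists_infinite_primes (ceilSqrt n))).1

theorem le_obP_sq (n : ℕ) : n ≤ obP n ^ 2 :=
  (le_ceilSqrt_sq n).trans (Nat.pow_le_pow_left (ceilSqrt_le_obP n) 2)

theorem obK_eq_ceilDiv (n : ℕ) {k : ℕ} (hk : 3 ≤ k) : obK n k = obP n ⌈/⌉ (k - 2) := by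
  rw [obK, Nat.ceilDiv_eq_add_pred_div]
  congr 1
  omega

theorem obP_le_mul_obK (n : ℕ) {k : ℕ} (hk : 3 ≤ k) : obP n ≤ (k - 2) * obK n k := by
  rw [obK_eq_ceilDiv n hk]
  exact le_smul_ceilDiv (Nat.sub_pos_of_lt hk)

theorem obK_pos (n : ℕ) {k : ℕ} (hk : 3 ≤ k) : 0 < obK n k :=
  Nat.pos_of_mul_pos_left ((obP_prime n).pos.trans_le (obP_le_mul_obK n hk))

theorem lineMem_offset_unique {p a : ℕ} {b b' : ZMod p} {q : ZMod p × ZMod p}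
    (hb : lineMem p a b q) (hb' : lineMem p a b' q) : b = b' := by
  unfold lineMem at hb hb'
  split_ifs at hb hb'
  · exact hb.symm.trans hb'
  · exact add_left_cancel (hb.symm.trans hb')

/-- The point `q` lies on the line of the `r`-th Line-Transmit step, that is, on `L_{a,b}` with
`b = r mod p` and `a = ⌊r/p⌋ mod (p+1)`. -/
def blockLineMem (p r : ℕ) (q : ZMod p × ZMod p) : Prop :=
  lineMem p ((r / p) % (p + 1)) ((r % p : ℕ) : ZMod p) q

theorem injOn_div_blockLineMem (p : ℕ) (q : ZMod p × ZMod p) :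
    Set.InjOn (· / p) {r | blockLineMem p r q} := by
  intro r hr r' hr' (hdiv : r / p = r' / p)
  simp only [Set.mem_ofPred_eq, blockLineMem, ← hdiv] at hr hr'
  have hmod : r % p = r' % p := by
    simpa only [ZMod.natCast_eq_natCast_iff', Nat.mod_mod] using lineMem_offset_unique hr hr'
  rw [← Nat.div_add_mod r p, hdiv, hmod, Nat.div_add_mod]

/-- The time of the `r`-th Line-Transmit step in blocks of length `K + 1`; steps are counted
from `1`, blocks from `0`. -/
def lineStep (K r : ℕ) : ℕ := r * (K + 1) + 1

/-- The time of the `j`-th Round-Robin step in blocks of length `K + 1`: it is preceded by `j`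
Round-Robin steps and `j / K + 1` Line-Transmit steps, and steps are counted from `1`. -/
def roundRobinStep (K j : ℕ) : ℕ := j + j / K + 2

theorem lineStep_strictMono (K : ℕ) : StrictMono (lineStep K) := fun _ _ hrs =>
  Nat.succ_lt_succ (Nat.mul_lt_mul_of_pos_right hrs K.succ_pos)

theorem lt_lineStep_iff {K T r : ℕ} : T < lineStep K r ↔ T ⌈/⌉ (K + 1) ≤ r := by
  rw [ceilDiv_le_iff_le_mul K.succ_pos, lineStep, Nat.lt_succ_iff, mul_comm]

theorem lineStep_lt_roundRobinStep {K a j : ℕ} (hK : 0 < K) (haj : a * K ≤ j) :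
    lineStep K a < roundRobinStep K j := by
  have hblock : a ≤ j / K := (Nat.le_div_iff_mul_le hK).2 haj
  rw [lineStep, roundRobinStep, mul_add_one]
  omega

theorem roundRobinStep_lt_lineStep {K j b : ℕ} (hK : 0 < K) (hjb : j < b * K) :
    roundRobinStep K j < lineStep K b := by
  have hblock : j / K < b := (Nat.div_lt_iff_lt_mul hK).2 hjb
  rw [lineStep, roundRobinStep, mul_add_one]
  omega

theorem exists_eq_lineStep {K t : ℕ} (ht : t ≠ 0) (hmod : (t - 1) % (K + 1) = 0) :
    ∃ r, t = lineStep K r := by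
  obtain ⟨r, hr⟩ := Nat.dvd_of_mod_eq_zero hmod
  refine ⟨r, ?_⟩
  rw [lineStep, mul_comm, ← hr]
  omega

theorem lineStep_sub_one_mod (K r : ℕ) : (lineStep K r - 1) % (K + 1) = 0 :=
  Nat.mul_mod_left r (K + 1)

theorem lineStep_sub_one_div (K r : ℕ) : (lineStep K r - 1) / (K + 1) = r :=
  Nat.mul_div_cancel r K.succ_pos

theorem roundRobinStep_sub_one (K j : ℕ) :
    roundRobinStep K j - 1 = (K + 1) * (j / K) + (j % K + 1) := by
  refine Nat.sub_eq_of_eq_add ?_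
  rw [roundRobinStep]
  linarith [Nat.div_add_mod j K]

theorem roundRobinStep_sub_one_mod {K : ℕ} (hK : 0 < K) (j : ℕ) :
    (roundRobinStep K j - 1) % (K + 1) = j % K + 1 := by
  rw [roundRobinStep_sub_one, Nat.mul_add_mod,
    Nat.mod_eq_of_lt (Nat.succ_lt_succ (Nat.mod_lt j hK))]

theorem roundRobinStep_sub_one_div {K : ℕ} (hK : 0 < K) (j : ℕ) :
    (roundRobinStep K j - 1) / (K + 1) = j / K := by
  rw [roundRobinStep_sub_one, Nat.mul_add_div K.succ_pos,
    Nat.div_eq_of_lt (Nat.succ_lt_succ (Nat.mod_lt j hK)), add_zero]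

section Schedule

variable {n k : ℕ} {v : Fin n}

theorem mem_obSched_lineStep {r : ℕ} :
    v ∈ obSched n k (lineStep (obK n k) r) ↔ blockLineMem (obP n) r (pointOf (obP n) v) := by
  have hpos : lineStep (obK n k) r ≠ 0 := Nat.succ_ne_zero _
  simp only [obSched, hpos, lineStep_sub_one_mod, lineStep_sub_one_div, if_false, if_true,
    Finset.mem_filter, Finset.mem_univ, true_and, blockLineMem]

theorem mem_obSched_roundRobinStep (hK : 0 < obK n k) {j : ℕ} :
    v ∈ obSched n k (roundRobinStep (obK n k) j) ↔ (v : ℕ) = j % obP n ^ 2 := by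
  have hpos : roundRobinStep (obK n k) j ≠ 0 := Nat.succ_ne_zero _
  simp [obSched, hpos, roundRobinStep_sub_one_mod hK, roundRobinStep_sub_one_div hK,
    Nat.div_add_mod']

theorem obSched_eq_singleton_of_mem {t : ℕ} (ht : (t - 1) % (obK n k + 1) ≠ 0)
    (hv : v ∈ obSched n k t) : obSched n k t = {v} := by
  have hpos : t ≠ 0 := by
    rintro rfl
    exact ht (Nat.zero_mod _)
  simp only [obSched, hpos, ht, if_false, Finset.mem_filter, Finset.mem_univ, true_and] at hv ⊢
  ext i
  simp [← hv, Fin.ext_iff]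

theorem exists_mem_obSched_roundRobinStep (hk : 3 ≤ k) (v : Fin n) (a : ℕ) :
    ∃ j, a * obK n k ≤ j ∧ j < (a + obP n * (k - 2)) * obK n k ∧
      v ∈ obSched n k (roundRobinStep (obK n k) j) := by
  obtain ⟨j, haj, hja, hjv⟩ :=
    exists_mod_eq_of_lt (v.isLt.trans_le (le_obP_sq n)) (a * obK n k)
  refine ⟨j, haj, ?_, (mem_obSched_roundRobinStep (obK_pos n hk)).2 hjv.symm⟩
  calc j < a * obK n k + obP n ^ 2 := hja
    _ ≤ a * obK n k + obP n * ((k - 2) * obK n k) := by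
      rw [sq]
      gcongr
      exact obP_le_mul_obK n hk
    _ = (a + obP n * (k - 2)) * obK n k := by ring

theorem exists_first_roundRobin_mem_obSched (hk : 3 ≤ k) (v : Fin n) (T : ℕ) :
    ∃ t, T < t ∧ (t - 1) % (obK n k + 1) ≠ 0 ∧ v ∈ obSched n k t ∧
      t ≤ lineStep (obK n k) (T ⌈/⌉ (obK n k + 1) + obP n * (k - 2)) ∧
      ∀ s ∈ Finset.Ioo T t, v ∈ obSched n k s → (s - 1) % (obK n k + 1) = 0 := by
  have hK := obK_pos n hk
  obtain ⟨j, haj, hjb, hvj⟩ := exists_mem_obSched_roundRobinStep hk v (T ⌈/⌉ (obK n k + 1))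
  have hj : T < roundRobinStep (obK n k) j ∧
      (roundRobinStep (obK n k) j - 1) % (obK n k + 1) ≠ 0 ∧
      v ∈ obSched n k (roundRobinStep (obK n k) j) := by
    refine ⟨(lt_lineStep_iff.2 le_rfl).trans (lineStep_lt_roundRobinStep hK haj), ?_, hvj⟩
    rw [roundRobinStep_sub_one_mod hK]
    exact Nat.succ_ne_zero _
  have hex : ∃ t, T < t ∧ (t - 1) % (obK n k + 1) ≠ 0 ∧ v ∈ obSched n k t := ⟨_, hj⟩
  obtain ⟨hTt, htRR, hvt⟩ := Nat.find_spec hex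
  refine ⟨Nat.find hex, hTt, htRR, hvt,
    (Nat.find_min' hex hj).trans (roundRobinStep_lt_lineStep hK hjb).le, fun s hs hvs => ?_⟩
  obtain ⟨hTs, hst⟩ := Finset.mem_Ioo.1 hs
  by_contra hsRR
  exact Nat.find_min hex hst ⟨hTs, hsRR, hvs⟩

theorem card_filter_mem_obSched_le {T t m : ℕ}
    (ht : t ≤ lineStep (obK n k) (T ⌈/⌉ (obK n k + 1) + obP n * m))
    (hline : ∀ s ∈ Finset.Ioo T t, v ∈ obSched n k s → (s - 1) % (obK n k + 1) = 0) :
    ((Finset.Ioo T t).filter (fun s => v ∈ obSched n k s)).card ≤ m + 1 := by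
  classical
  set a := T ⌈/⌉ (obK n k + 1)
  set B := (Finset.Ico a (a + obP n * m)).filter
    (fun r => blockLineMem (obP n) r (pointOf (obP n) v))
  have hsub : (Finset.Ioo T t).filter (fun s => v ∈ obSched n k s) ⊆
      B.image (lineStep (obK n k)) := by
    intro s hs
    obtain ⟨hsI, hvs⟩ := Finset.mem_filter.1 hs
    obtain ⟨hTs, hst⟩ := Finset.mem_Ioo.1 hsI
    obtain ⟨r, rfl⟩ := exists_eq_lineStep (Nat.ne_zero_of_lt hTs) (hline s hsI hvs)
    have hr_lt : r < a + obP n * m := (lineStep_strictMono _).lt_iff_lt.1 (hst.trans_le ht)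
    exact Finset.mem_image_of_mem _ (Finset.mem_filter.2
      ⟨Finset.mem_Ico.2 ⟨lt_lineStep_iff.1 hTs, hr_lt⟩, mem_obSched_lineStep.1 hvs⟩)
  have hinj : Set.InjOn (· / obP n) (B : Set ℕ) :=
    (injOn_div_blockLineMem (obP n) (pointOf (obP n) v)).mono
      fun r hr => (Finset.mem_filter.1 hr).2
  calc _ ≤ (B.image (lineStep (obK n k))).card := Finset.card_le_card hsub
    _ ≤ B.card := Finset.card_image_le
    _ ≤ m + 1 := card_le_of_subset_Ico_of_injOn_div (obP_prime n).pos
      (Finset.filter_subset _ _) hinj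

end Schedule

theorem oblivious_kshot_validity_general (n k : ℕ) (hk : 3 ≤ k) (v : Fin n) (T : ℕ) :
    ∃ t : ℕ, T < t ∧
      (t - 1) % (obK n k + 1) ≠ 0 ∧
      obSched n k t = {v} ∧
      ((Finset.Ioo T t).filter (fun t' => v ∈ obSched n k t')).card < k := by
  obtain ⟨t, hTt, htRR, hvt, ht_le, hline⟩ := exists_first_roundRobin_mem_obSched hk v T
  refine ⟨t, hTt, htRR, obSched_eq_singleton_of_mem htRR hvt, ?_⟩
  have hcard := card_filter_mem_obSched_le ht_le hline
  omega

/-- **Validity.** In the Oblivious k-Shot schedule (`3 ≤ k ≤ √n`), for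
every vertex `v` and every step `T`, among the first `k` steps after `T` at which `v`
belongs to the transmission set there is a Round-Robin step whose transmission set is
exactly the singleton `{v}`.  (Hence every informed vertex transmits at least once as
the only transmitting node of the network.) -/
theorem oblivious_kshot_validity (n k : ℕ) (hk : 3 ≤ k) (hkn : k ^ 2 ≤ n)
    (v : Fin n) (T : ℕ) :
    ∃ t : ℕ, T < t ∧
      -- `t` is a Round-Robin step:
      (t - 1) % (obK n k + 1) ≠ 0 ∧
      -- the transmission set of step `t` is the singleton `{v}`:
      obSched n k t = {v} ∧
      -- `t` is among the first `k` steps after `T` at which `v` transmits, i.e.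
      -- fewer than `k` steps `t'` with `T < t' < t` have `v` in the transmission set:
      ((Finset.Ioo T t).filter (fun t' => v ∈ obSched n k t')).card < k :=
  oblivious_kshot_validity_general n k hk v T
end
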